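/- Let ε > 0 and let η, v : ℝ × ℝ → ℝ be C^∞ functions with 1 + ε·η > 0 pointwise, satisfying ∂_t η + ∂_x v = 0 and ∂_t v + (1+εη)∂_x η − ε(1+εη)∂_x³η + ε ∂_x( v²/(1+εη) ) = 0. Set η' = ∂_t η, v' = ∂_t v, f = 2ε(∂_xv)²/(1+εη) − 2ε² v (∂_xv)(∂_xη)/(1+εη)² − ε² ∂_x( (∂_xη)v²/(1+εη)² ), and g = −(ε ∂_tη/(1+εη))(∂_xη − ε ∂_x³η) − 2ε(∂_xv)(∂_tv)/(1+εη)² + (ε²/(1+εη))∂_x( v² ∂_tη/(1+εη)² ). Then for all (t,x): (i) ∂_t²η' − ∂_x((1+εη)∂_xη') + ε ∂_x((1+εη)∂_x³η') + (2εv/(1+εη))∂_t∂_xη' = f', where f' = ∂_t f + ε ∂_x(∂_tη·∂_xη) − ε² ∂_x(∂_tη·∂_x³η) − 2ε ∂_t(v/(1+εη))·∂_t∂_xη; and (ii) (1/(1+εη))∂_t²v' − ∂_x²v' + ε ∂_x⁴v' + (2εv/(1+εη))∂_x( ∂_tv'/(1+εη) ) = g', where g' = ∂_t g + (ε ∂_tη/(1+εη)²)·∂_t²v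 + (2ε²v/(1+εη))·∂_x( ∂_tη·∂_tv/(1+εη)² ) − 2ε ∂_t(v/(1+εη))·∂_x( ∂_tv/(1+εη) ). -/

import Mathlib

/-- Partial derivative in the first (time) variable of `f : ℝ → ℝ → ℝ`. -/
noncomputable def dt1 (f : ℝ → ℝ → ℝ) : ℝ → ℝ → ℝ := fun t x => deriv (fun s => f s x) t

/-- Partial derivative in the second (space) variable of `f : ℝ → ℝ → ℝ`. -/
noncomputable def dx1 (f : ℝ → ℝ → ℝ) : ℝ → ℝ → ℝ := fun t x => deriv (fun y => f t y) x

def SM (a : ℝ → ℝ → ℝ) : Prop := ContDiff ℝ (⊤ : ℕ∞) fun p : ℝ × ℝ => a p.1 p.2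

lemma SM.hasT {a : ℝ → ℝ → ℝ} (ha : SM a) (t x : ℝ) :
    HasDerivAt (fun s => a s x) (fderiv ℝ (fun p : ℝ × ℝ => a p.1 p.2) (t, x) (1, 0)) t := by
  have h1 : HasFDerivAt (fun p : ℝ × ℝ => a p.1 p.2) _ (t, x) :=
    (ContDiff.differentiable ha (by simp) (t, x)).hasFDerivAt
  exact h1.comp_hasDerivAt (f := fun s : ℝ => (s, x)) t
    ((hasDerivAt_id t).prodMk (hasDerivAt_const t x))

lemma SM.hasX {a : ℝ → ℝ → ℝ} (ha : SM a) (t x : ℝ) :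
    HasDerivAt (fun y => a t y) (fderiv ℝ (fun p : ℝ × ℝ => a p.1 p.2) (t, x) (0, 1)) x := by
  have h1 : HasFDerivAt (fun p : ℝ × ℝ => a p.1 p.2) _ (t, x) :=
    (ContDiff.differentiable ha (by simp) (t, x)).hasFDerivAt
  exact h1.comp_hasDerivAt (f := fun y : ℝ => (t, y)) x
    ((hasDerivAt_const x t).prodMk (hasDerivAt_id x))

lemma SM.dT {a : ℝ → ℝ → ℝ} (ha : SM a) (t x : ℝ) :
    HasDerivAt (fun s => a s x) (dt1 a t x) t := (ha.hasT t x).differentiableAt.hasDerivAt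

lemma SM.dX {a : ℝ → ℝ → ℝ} (ha : SM a) (t x : ℝ) :
    HasDerivAt (fun y => a t y) (dx1 a t x) x := (ha.hasX t x).differentiableAt.hasDerivAt

lemma SM.eqT {a : ℝ → ℝ → ℝ} (ha : SM a) (t x : ℝ) :
    dt1 a t x = fderiv ℝ (fun p : ℝ × ℝ => a p.1 p.2) (t, x) (1, 0) := (ha.hasT t x).deriv

lemma SM.eqX {a : ℝ → ℝ → ℝ} (ha : SM a) (t x : ℝ) :
    dx1 a t x = fderiv ℝ (fun p : ℝ × ℝ => a p.1 p.2) (t, x) (0, 1) := (ha.hasX t x).deriv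

lemma SM.fd {a : ℝ → ℝ → ℝ} (ha : SM a) :
    ContDiff ℝ (⊤ : ℕ∞) (fderiv ℝ (fun p : ℝ × ℝ => a p.1 p.2)) :=
  ContDiff.fderiv_right ha (by simp)

lemma SM.dt {a : ℝ → ℝ → ℝ} (ha : SM a) : SM (dt1 a) := by
  unfold SM
  simp only [ha.eqT]
  exact ha.fd.clm_apply contDiff_const

lemma SM.dx {a : ℝ → ℝ → ℝ} (ha : SM a) : SM (dx1 a) := by
  unfold SM
  simp only [ha.eqX]
  exact ha.fd.clm_apply contDiff_const

lemma SM.comm {a : ℝ → ℝ → ℝ} (ha : SM a) : dt1 (dx1 a) = dx1 (dt1 a) := by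
  funext t x
  rw [ha.dx.eqT, ha.dt.eqX]
  simp only [ha.eqT, ha.eqX]
  have hd : DifferentiableAt ℝ (fderiv ℝ (fun p : ℝ × ℝ => a p.1 p.2)) (t, x) :=
    ha.fd.differentiable (by simp) _
  have e (w : ℝ × ℝ) : fderiv ℝ (fun p : ℝ × ℝ =>
      fderiv ℝ (fun p : ℝ × ℝ => a p.1 p.2) (p.1, p.2) w) (t, x)
      = (fderiv ℝ (fderiv ℝ (fun p : ℝ × ℝ => a p.1 p.2)) (t, x)).flip w := by
    have := (hd.hasFDerivAt.clm_apply (hasFDerivAt_const w (t, x))).fderiv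
    simpa using this
  rw [e, e]
  have hs : IsSymmSndFDerivAt ℝ (fun p : ℝ × ℝ => a p.1 p.2) (t, x) :=
    (ContDiff.contDiffAt ha).isSymmSndFDerivAt (by
      simp only [minSmoothness_of_isRCLikeNormedField]
      exact WithTop.coe_le_coe.2 (le_top : (2 : ℕ∞) ≤ ⊤))
  exact hs.eq _ _

lemma SM.const (c : ℝ) : SM (fun _ _ => c) := contDiff_const
lemma SM.add {a b : ℝ → ℝ → ℝ} (ha : SM a) (hb : SM b) : SM (fun t x => a t x + b t x) :=
  ContDiff.add ha hb
lemma SM.sub {a b : ℝ → ℝ → ℝ} (ha : SM a) (hb : SM b) : SM (fun t x => a t x - b t x) :=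
  ContDiff.sub ha hb
lemma SM.mul {a b : ℝ → ℝ → ℝ} (ha : SM a) (hb : SM b) : SM (fun t x => a t x * b t x) :=
  ContDiff.mul ha hb
lemma SM.neg {a : ℝ → ℝ → ℝ} (ha : SM a) : SM (fun t x => - a t x) := ContDiff.neg ha
lemma SM.sq {a : ℝ → ℝ → ℝ} (ha : SM a) : SM (fun t x => a t x ^ 2) := ContDiff.pow ha 2

lemma dt_const (c : ℝ) : dt1 (fun _ _ => c) = fun _ _ => 0 := by
  funext t x; simp [dt1]
lemma dt_add {a b : ℝ → ℝ → ℝ} (ha : SM a) (hb : SM b) :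
    dt1 (fun t x => a t x + b t x) = fun t x => dt1 a t x + dt1 b t x := by
  funext t x; exact ((ha.dT t x).add (hb.dT t x)).deriv
lemma dt_sub {a b : ℝ → ℝ → ℝ} (ha : SM a) (hb : SM b) :
    dt1 (fun t x => a t x - b t x) = fun t x => dt1 a t x - dt1 b t x := by
  funext t x; exact ((ha.dT t x).sub (hb.dT t x)).deriv
lemma dt_neg {a : ℝ → ℝ → ℝ} (ha : SM a) :
    dt1 (fun t x => - a t x) = fun t x => - dt1 a t x := by
  funext t x; exact ((ha.dT t x).neg).deriv
lemma dt_mul {a b : ℝ → ℝ → ℝ} (ha : SM a) (hb : SM b) :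
    dt1 (fun t x => a t x * b t x) = fun t x => dt1 a t x * b t x + a t x * dt1 b t x := by
  funext t x; exact ((ha.dT t x).mul (hb.dT t x)).deriv
lemma dt_sq {a : ℝ → ℝ → ℝ} (ha : SM a) :
    dt1 (fun t x => a t x ^ 2) = fun t x => 2 * a t x * dt1 a t x := by
  funext t x
  have : deriv _ _ = _ := ((ha.dT t x).fun_pow 2).deriv
  simpa [dt1] using this

lemma dx_const (c : ℝ) : dx1 (fun _ _ => c) = fun _ _ => 0 := by
  funext t x; simp [dx1]
lemma dx_add {a b : ℝ → ℝ → ℝ} (ha : SM a) (hb : SM b) :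
    dx1 (fun t x => a t x + b t x) = fun t x => dx1 a t x + dx1 b t x := by
  funext t x; exact ((ha.dX t x).add (hb.dX t x)).deriv
lemma dx_sub {a b : ℝ → ℝ → ℝ} (ha : SM a) (hb : SM b) :
    dx1 (fun t x => a t x - b t x) = fun t x => dx1 a t x - dx1 b t x := by
  funext t x; exact ((ha.dX t x).sub (hb.dX t x)).deriv
lemma dx_neg {a : ℝ → ℝ → ℝ} (ha : SM a) :
    dx1 (fun t x => - a t x) = fun t x => - dx1 a t x := by
  funext t x; exact ((ha.dX t x).neg).deriv
lemma dx_mul {a b : ℝ → ℝ → ℝ} (ha : SM a) (hb : SM b) :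
    dx1 (fun t x => a t x * b t x) = fun t x => dx1 a t x * b t x + a t x * dx1 b t x := by
  funext t x; exact ((ha.dX t x).mul (hb.dX t x)).deriv
lemma dx_sq {a : ℝ → ℝ → ℝ} (ha : SM a) :
    dx1 (fun t x => a t x ^ 2) = fun t x => 2 * a t x * dx1 a t x := by
  funext t x
  have : deriv _ _ = _ := ((ha.dX t x).fun_pow 2).deriv
  simpa [dx1] using this

/-- The time-differentiated quasilinear system (4.38)–(4.39) of the paper:
with `η' = ∂_t η`, `v' = ∂_t v`, and `f`, `g` the source terms of the quasilinearized
system, `(η', v')` satisfies the same quasilinear equations with sources `f'`, `g'`. -/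
theorem quasilinear_time_diff_1d (ε : ℝ) (hε : 0 < ε) (η v f g : ℝ → ℝ → ℝ)
    (hη : ContDiff ℝ (⊤ : ℕ∞) fun p : ℝ × ℝ => η p.1 p.2)
    (hv : ContDiff ℝ (⊤ : ℕ∞) fun p : ℝ × ℝ => v p.1 p.2)
    (hpos : ∀ t x, 0 < 1 + ε * η t x)
    (heq1 : ∀ t x, dt1 η t x + dx1 v t x = 0)
    (heq2 : ∀ t x, dt1 v t x + (1 + ε * η t x) * dx1 η t x
      - ε * (1 + ε * η t x) * dx1 (dx1 (dx1 η)) t x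
      + ε * dx1 (fun t x => v t x ^ 2 / (1 + ε * η t x)) t x = 0)
    (hf : ∀ t x, f t x = 2 * ε * dx1 v t x ^ 2 / (1 + ε * η t x)
      - 2 * ε ^ 2 * v t x * dx1 v t x * dx1 η t x / (1 + ε * η t x) ^ 2
      - ε ^ 2 * dx1 (fun t x => dx1 η t x * v t x ^ 2 / (1 + ε * η t x) ^ 2) t x)
    (hg : ∀ t x, g t x =
      -(ε * dt1 η t x / (1 + ε * η t x)) * (dx1 η t x - ε * dx1 (dx1 (dx1 η)) t x)
      - 2 * ε * dx1 v t x * dt1 v t x / (1 + ε * η t x) ^ 2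
      + ε ^ 2 / (1 + ε * η t x) *
          dx1 (fun t x => v t x ^ 2 * dt1 η t x / (1 + ε * η t x) ^ 2) t x) :
    (∀ t x,
      dt1 (dt1 (dt1 η)) t x
        - dx1 (fun t x => (1 + ε * η t x) * dx1 (dt1 η) t x) t x
        + ε * dx1 (fun t x => (1 + ε * η t x) * dx1 (dx1 (dx1 (dt1 η))) t x) t x
        + (2 * ε * v t x / (1 + ε * η t x)) * dt1 (dx1 (dt1 η)) t x
      = dt1 f t x + ε * dx1 (fun t x => dt1 η t x * dx1 η t x) t x
        - ε ^ 2 * dx1 (fun t x => dt1 η t x * dx1 (dx1 (dx1 η)) t x) t x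
        - 2 * ε * dt1 (fun t x => v t x / (1 + ε * η t x)) t x * dt1 (dx1 η) t x) ∧
    (∀ t x,
      (1 / (1 + ε * η t x)) * dt1 (dt1 (dt1 v)) t x
        - dx1 (dx1 (dt1 v)) t x
        + ε * dx1 (dx1 (dx1 (dx1 (dt1 v)))) t x
        + (2 * ε * v t x / (1 + ε * η t x)) *
            dx1 (fun t x => dt1 (dt1 v) t x / (1 + ε * η t x)) t x
      = dt1 g t x + ε * dt1 η t x / (1 + ε * η t x) ^ 2 * dt1 (dt1 v) t x
        + 2 * ε ^ 2 * v t x / (1 + ε * η t x) *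
            dx1 (fun t x => dt1 η t x * dt1 v t x / (1 + ε * η t x) ^ 2) t x
        - 2 * ε * dt1 (fun t x => v t x / (1 + ε * η t x)) t x *
            dx1 (fun t x => dt1 v t x / (1 + ε * η t x)) t x) := by
  have Sη : SM η := hη
  have Sv : SM v := hv
  obtain ⟨q, hq⟩ : ∃ q : ℝ → ℝ → ℝ, ∀ t x, (1 + ε * η t x)⁻¹ = q t x := ⟨_, fun _ _ => rfl⟩
  have hne : ∀ t x, 1 + ε * η t x ≠ 0 := fun t x => (hpos t x).ne'
  have hq1 : ∀ t x, (1 + ε * η t x) * q t x = 1 := fun t x => by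
    rw [← hq]; exact mul_inv_cancel₀ (hne t x)
  have Sq : SM q := by
    unfold SM
    simp only [← hq]
    exact ContDiff.inv (contDiff_const.add (contDiff_const.mul hη)) (fun p => hne p.1 p.2)
  have qt : dt1 q = fun t x => -(ε * dt1 η t x * q t x ^ 2) := by
    funext t x
    have e : (fun t x => (1 + ε * η t x) * q t x) = fun _ _ => (1 : ℝ) := by
      funext t x; exact hq1 t x
    have := congrFun (congrFun (congrArg dt1 e) t) x
    simp (maxDischargeDepth := 40) only [SM.const, SM.add, SM.mul, Sη, Sq, dt_const, dt_add, dt_mul] at this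
    linear_combination q t x * this - dt1 q t x * hq1 t x
  have qx : dx1 q = fun t x => -(ε * dx1 η t x * q t x ^ 2) := by
    funext t x
    have e : (fun t x => (1 + ε * η t x) * q t x) = fun _ _ => (1 : ℝ) := by
      funext t x; exact hq1 t x
    have := congrFun (congrFun (congrArg dx1 e) t) x
    simp (maxDischargeDepth := 40) only [SM.const, SM.add, SM.mul, Sη, Sq, dx_const, dx_add, dx_mul] at this
    linear_combination q t x * this - dx1 q t x * hq1 t x
  have E1 : (fun t x => dt1 η t x + dx1 v t x) = fun _ _ => 0 := by
    funext t x; exact heq1 t x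
  simp only [div_eq_mul_inv, ← inv_pow, hq, one_mul] at heq2 hf hg ⊢
  have E2 := funext fun t => funext fun x => heq2 t x
  have E1t := congrArg dt1 E1
  have E1x := congrArg dx1 E1
  have E1xxx := congrArg dx1 (congrArg dx1 E1x)
  have E2t := congrArg dt1 E2
  have E2x := congrArg dx1 E2
  simp (maxDischargeDepth := 40) only [SM.const, SM.add, SM.sub, SM.mul, SM.neg, SM.sq, SM.dt, SM.dx, Sη, Sv, Sq, SM.comm, dt_const, dt_add, dt_sub, dt_neg, dt_mul, dt_sq, dx_const, dx_add, dx_sub, dx_neg, dx_mul, dx_sq, qt, qx] at E1t E1x E1xxx E2t E2x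
  have B1 : (fun t x => dt1 (dt1 η) t x
        - dx1 (fun t x => (1 + ε * η t x) * dx1 η t x) t x
        + ε * dx1 (fun t x => (1 + ε * η t x) * dx1 (dx1 (dx1 η)) t x) t x
        + (2 * ε * v t x * q t x) * dt1 (dx1 η) t x) = f := by
    funext t x
    rw [hf]
    simp (maxDischargeDepth := 40) only [SM.const, SM.add, SM.sub, SM.mul, SM.neg, SM.sq, SM.dt, SM.dx, Sη, Sv, Sq, SM.comm, dt_const, dt_add, dt_sub, dt_neg, dt_mul, dt_sq, dx_const, dx_add, dx_sub, dx_neg, dx_mul, dx_sq, qt, qx]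
    linear_combination congrFun (congrFun E1t t) x - congrFun (congrFun E2x t) x
      + 2 * ε * v t x * q t x * congrFun (congrFun E1x t) x
  have B2 : (fun t x => q t x * dt1 (dt1 v) t x
        - dx1 (dx1 v) t x
        + ε * dx1 (dx1 (dx1 (dx1 v))) t x
        + (2 * ε * v t x * q t x) * dx1 (fun t x => dt1 v t x * q t x) t x) = g := by
    funext t x
    rw [hg]
    simp (maxDischargeDepth := 40) only [SM.const, SM.add, SM.sub, SM.mul, SM.neg, SM.sq, SM.dt, SM.dx, Sη, Sv, Sq, SM.comm, dt_const, dt_add, dt_sub, dt_neg, dt_mul, dt_sq, dx_const, dx_add, dx_sub, dx_neg, dx_mul, dx_sq, qt, qx]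
    linear_combination q t x * congrFun (congrFun E2t t) x - congrFun (congrFun E1x t) x
      + ε * congrFun (congrFun E1xxx t) x
      - (dx1 (dt1 η) t x - ε * dx1 (dx1 (dx1 (dt1 η))) t x) * hq1 t x
  have B1t := congrArg dt1 B1
  have B2t := congrArg dt1 B2
  clear E1t E1x E1xxx E2t E2x E1 E2 B1 B2 hf hg heq1 heq2
  simp (maxDischargeDepth := 40) only [SM.const, SM.add, SM.sub, SM.mul, SM.neg, SM.sq, SM.dt, SM.dx, Sη, Sv, Sq, SM.comm, dt_const, dt_add, dt_sub, dt_neg, dt_mul, dt_sq, dx_const, dx_add, dx_sub, dx_neg, dx_mul, dx_sq, qt, qx] at B1t B2t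
  constructor
  · intro t x
    simp (maxDischargeDepth := 40) only [SM.const, SM.add, SM.sub, SM.mul, SM.neg, SM.sq, SM.dt, SM.dx, Sη, Sv, Sq, SM.comm, dt_const, dt_add, dt_sub, dt_neg, dt_mul, dt_sq, dx_const, dx_add, dx_sub, dx_neg, dx_mul, dx_sq, qt, qx]
    linear_combination congrFun (congrFun B1t t) x
  · intro t x
    simp (maxDischargeDepth := 40) only [SM.const, SM.add, SM.sub, SM.mul, SM.neg, SM.sq, SM.dt, SM.dx, Sη, Sv, Sq, SM.comm, dt_const, dt_add, dt_sub, dt_neg, dt_mul, dt_sq, dx_const, dx_add, dx_sub, dx_neg, dx_mul, dx_sq, qt, qx]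
    linear_combination congrFun (congrFun B2t t) x
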